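/- Let c₁, c₂, c₃ ∈ 𝔽_p^* and set ρ = Σ_{c ∈ 𝔽_p^*} Σ_{x ∈ 𝔽_p^*} χ̄₁(x(c−c₁)) Σ_{y ∈ 𝔽_p^*} χ̄₁(−y c₂) η̄(y) Σ_{z ∈ 𝔽_p^*} χ̄₁(−z²c/(4y) − z c₃). Then ρ = −(η̄(−c₁) + η̄(−c₂))·Ḡ + η̄(−c₁)(p−1)²·Ḡ if c₃² − c₁c₂ = 0, and ρ = −(p+1)·η̄(−c₂)·Ḡ − p·η̄(−c₁)·Ḡ if c₃² − c₁c₂ ≠ 0. -/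

import Mathlib

/-!
Let `q` be the size of the field. Completing the square evaluates the sum over `z` as
`η(-c) η(y) G ψ(y c₃² / c) - 1`. The factor `η(y)` cancels the one in the sum over `y`, which
therefore splits into a complete additive character sum, detecting `c c₂ = c₃²`, and a Gauss sum;
call the result `g(c)`. By orthogonality, the sum over `c` and `x` of `ψ(x (c - c₁)) g(c)` is
`q g(c₁)` minus the total of `g`. Since `η` sums to zero, that total is `q η(-c₂) G`, from the
condition `c c₂ = c₃²`, minus `(q - 1) η(-c₂) G`.
-/

open Finset
open scoped Classical

noncomputable section

/-- `ζ_p = exp(2πi/p)`. -/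
def zeta (p : ℕ) : ℂ := Complex.exp (2 * Real.pi * Complex.I / p)

/-- The canonical additive character of `ℤ/p`: `χ̄₁(c) = ζ_p^c`. -/
def chiBar (p : ℕ) (c : ZMod p) : ℂ := zeta p ^ c.val

/-- The quadratic character of `(ℤ/p)^*`, extended by `η̄(0) = 0`. -/
def etaBar (p : ℕ) (c : ZMod p) : ℂ :=
  if c = 0 then 0 else if IsSquare c then 1 else -1

/-- The quadratic character of `F^*`, extended by `η(0) = 0`. -/
def etaQ (F : Type) [Field F] (x : F) : ℂ :=
  if x = 0 then 0 else if IsSquare x then 1 else -1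

/-- The absolute trace map from `F` to `ℤ/p`. -/
def Trq (p : ℕ) (F : Type) [Field F] [Algebra (ZMod p) F] (x : F) : ZMod p :=
  Algebra.trace (ZMod p) F x

/-- The canonical additive character of `F`: `χ₁(x) = ζ_p^{Tr x}`. -/
def chiQ (p : ℕ) (F : Type) [Field F] [Algebra (ZMod p) F] (x : F) : ℂ :=
  chiBar p (Trq p F x)

/-- The quadratic Gauss sum `G` over `F`. -/
def GaussQ (p : ℕ) (F : Type) [Field F] [Fintype F] [Algebra (ZMod p) F] : ℂ :=
  ∑ x ∈ univ.filter (fun x : F => x ≠ 0), etaQ F x * chiQ p F x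

/-- The quadratic Gauss sum `Ḡ` over `ℤ/p`. -/
def GaussP (p : ℕ) [NeZero p] : ℂ :=
  ∑ y ∈ univ.filter (fun y : ZMod p => y ≠ 0), etaBar p y * chiBar p y

lemma sum_filter_ne_eq_sub {ι M : Type*} [Fintype ι] [DecidableEq ι] [AddCommGroup M]
    (f : ι → M) (a : ι) : ∑ x with x ≠ a, f x = ∑ x, f x - f a := by
  rw [filter_ne', sum_erase_eq_sub (mem_univ a)]

lemma four_ne_zero_of_ringChar_ne_two {F : Type*} [Field F] (hF : ringChar F ≠ 2) :
    (4 : F) ≠ 0 := by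
  simpa [show (4 : F) = 2 ^ 2 by norm_num] using Ring.two_ne_zero hF

section Orthogonality

variable {S R : Type*} [CommRing S] [Fintype S] [DecidableEq S] [CommRing R] [IsDomain R]
  {ψ : AddChar S R} (hψ : ψ.IsPrimitive)
include hψ

lemma sum_ne_zero_mulShift (t : S) :
    ∑ x with x ≠ 0, ψ (x * t) = (if t = 0 then (Fintype.card S : R) else 0) - 1 := by
  rw [sum_filter_ne_eq_sub, AddChar.sum_mulShift t hψ, zero_mul, AddChar.map_zero_eq_one]
  push_cast
  rfl

lemma sum_sum_mulShift_mul {a : S} (ha : a ≠ 0) (g : S → R) :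
    ∑ c with c ≠ 0, ∑ x with x ≠ 0, ψ (x * (c - a)) * g c =
      Fintype.card S * g a - ∑ c with c ≠ 0, g c := by
  simp only [← sum_mul, sum_ne_zero_mulShift hψ, sub_eq_zero, sub_mul, ite_mul, zero_mul,
    one_mul, sum_sub_distrib]
  simp [ha]

end Orthogonality

section QuadraticCharacter

variable (F R : Type*) [Field F] [Fintype F] [DecidableEq F] [CommRing R]

/-- The quadratic character of a finite field `F` with values in an arbitrary commutative ring `R`,
so that it can be combined with `R`-valued additive characters in Gauss sums. -/
def quadraticCharIn : MulChar F R :=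
  (quadraticChar F).ringHomComp (Int.castRingHom R)

local notation "η" => quadraticCharIn F R

lemma quadraticCharIn_apply (a : F) : η a = (quadraticChar F a : R) :=
  rfl

lemma quadraticCharIn_zero : η 0 = 0 := by
  simp [quadraticCharIn_apply]

variable {F}

lemma quadraticCharIn_sq_eq_one {a : F} (ha : a ≠ 0) : η a ^ 2 = 1 := by
  rw [quadraticCharIn_apply]
  exact_mod_cast congrArg (Int.cast (R := R)) (quadraticChar_sq_one ha)

lemma quadraticCharIn_eq_of_mul_eq_sq {a b d : F} (hd : d ≠ 0) (h : a * b = d ^ 2) :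
    η a = η b := by
  have hb : b ≠ 0 := right_ne_zero_of_mul (h ▸ pow_ne_zero 2 hd)
  calc η a = η a * η b * η b := by
        linear_combination (-η a) * quadraticCharIn_sq_eq_one R hb
    _ = η b := by rw [← map_mul, h, map_pow, quadraticCharIn_sq_eq_one R hd, one_mul]

lemma quadraticCharIn_neg_eq_of_mul_eq_sq {a b d : F} (hd : d ≠ 0) (h : a * b = d ^ 2) :
    η (-a) = η (-b) :=
  quadraticCharIn_eq_of_mul_eq_sq R hd (by rw [neg_mul_neg, h])

lemma sum_quadraticCharIn_neg_of_mul_eq_sq {b d : F} (hd : d ≠ 0) :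
    ∑ c with c * b = d ^ 2, η (-c) = η (-b) := by
  obtain rfl | hb := eq_or_ne b 0
  · simp [quadraticCharIn_zero, (pow_ne_zero 2 hd).symm]
  · have hfiber : ({c | c * b = d ^ 2} : Finset F) = {d ^ 2 / b} := by
      ext c
      simp [eq_div_iff hb]
    rw [hfiber, sum_singleton]
    exact quadraticCharIn_neg_eq_of_mul_eq_sq R hd (div_mul_cancel₀ _ hb)

variable (hF : ringChar F ≠ 2)
include hF

lemma sum_quadraticCharIn : ∑ a, η a = 0 := by
  simp only [quadraticCharIn_apply]
  exact_mod_cast congrArg (Int.cast (R := R)) (quadraticChar_sum_zero hF)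

lemma sum_comp_sq (f : F → R) : ∑ z, f (z ^ 2) = ∑ w, (η w + 1) * f w := by
  rw [← sum_fiberwise' univ (fun z : F => z ^ 2) f]
  refine sum_congr rfl fun w _ => ?_
  have hcard : (#{z | z ^ 2 = w} : R) = η w + 1 := by
    have h := congrArg (Int.cast (R := R)) (quadraticChar_card_sqrts hF w)
    rw [Set.toFinset_ofPred] at h
    simpa [quadraticCharIn_apply] using h
  rw [sum_const, nsmul_eq_mul, hcard]

end QuadraticCharacter

section GaussSum

variable {F R : Type*} [Field F] [Fintype F] [DecidableEq F] [CommRing R]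

local notation "η" => quadraticCharIn F R

lemma gaussSum_quadraticCharIn_mulShift (hF : ringChar F ≠ 2) (ψ : AddChar F R) (t : F) :
    gaussSum η (ψ.mulShift t) = η t * gaussSum η ψ := by
  obtain rfl | ht := eq_or_ne t 0
  · simp [gaussSum, sum_quadraticCharIn R hF, quadraticCharIn_zero]
  · have hshift : η t * gaussSum η (ψ.mulShift t) = gaussSum η ψ :=
      gaussSum_mulShift η ψ (Units.mk0 t ht)
    linear_combination η t * hshift -
      gaussSum η (ψ.mulShift t) * quadraticCharIn_sq_eq_one R ht

variable [IsDomain R] {ψ : AddChar F R} (hψ : ψ.IsPrimitive) (hF : ringChar F ≠ 2)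
include hψ hF

lemma sum_addChar_mul_sq {A : F} (hA : A ≠ 0) :
    ∑ z, ψ (A * z ^ 2) = η A * gaussSum η ψ := by
  have hψA : ∑ w, ψ (A * w) = 0 := by
    simpa [mul_comm, hA] using AddChar.sum_mulShift A hψ
  rw [sum_comp_sq R hF (fun w => ψ (A * w)), ← gaussSum_quadraticCharIn_mulShift hF]
  simp only [add_mul, one_mul, sum_add_distrib, hψA, add_zero, gaussSum, AddChar.mulShift_apply]

lemma sum_addChar_quadratic {A : F} (hA : A ≠ 0) (B : F) :
    ∑ z, ψ (A * z ^ 2 + B * z) = η A * gaussSum η ψ * ψ (-B ^ 2 / (4 * A)) := by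
  have h2 : (2 : F) ≠ 0 := Ring.two_ne_zero hF
  have h4 : (4 : F) ≠ 0 := four_ne_zero_of_ringChar_ne_two hF
  rw [← sum_addChar_mul_sq hψ hF hA, sum_mul,
    ← Equiv.sum_comp (Equiv.addRight (B / (2 * A)))
      (fun z => ψ (A * z ^ 2) * ψ (-B ^ 2 / (4 * A)))]
  refine sum_congr rfl fun z _ => ?_
  rw [← AddChar.map_add_eq_mul, Equiv.coe_addRight]
  congr 1
  field_simp
  ring

end GaussSum

section Rho

variable {F R : Type*} [Field F] [Fintype F] [DecidableEq F] [CommRing R]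

local notation "η" => quadraticCharIn F R

/-- The sum over `y` and `z` inside `ρ`, as a function of the outer variable `c`. -/
def rhoInner (ψ : AddChar F R) (c₂ c₃ c : F) : R :=
  ∑ y with y ≠ 0, ψ (-(y * c₂)) * η y *
    ∑ z with z ≠ 0, ψ (-(z ^ 2 * c) / (4 * y) - z * c₃)

/-- The exponential sum `ρ`, over any finite field and for any additive character `ψ`. -/
def rho (ψ : AddChar F R) (c₁ c₂ c₃ : F) : R :=
  ∑ c with c ≠ 0, ∑ x with x ≠ 0, ψ (x * (c - c₁)) * rhoInner ψ c₂ c₃ c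

variable [IsDomain R] {ψ : AddChar F R} (hψ : ψ.IsPrimitive) (hF : ringChar F ≠ 2)
include hψ hF

lemma sum_ne_zero_addChar_quadratic {c y : F} (hc : c ≠ 0) (hy : y ≠ 0) (d : F) :
    ∑ z with z ≠ 0, ψ (-(z ^ 2 * c) / (4 * y) - z * d) =
      η (-c) * η y * gaussSum η ψ * ψ (y * (d ^ 2 / c)) - 1 := by
  have h2 : (2 : F) ≠ 0 := Ring.two_ne_zero hF
  have h4 : (4 : F) ≠ 0 := four_ne_zero_of_ringChar_ne_two hF
  have hA : -c / (4 * y) ≠ 0 := div_ne_zero (neg_ne_zero.mpr hc) (mul_ne_zero h4 hy)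
  have hηA : η (-c / (4 * y)) = η (-c) * η y := by
    rw [← map_mul]
    exact quadraticCharIn_eq_of_mul_eq_sq R (d := c / 2) (div_ne_zero hc h2)
      (by field_simp; norm_num)
  have hvertex : -(-d) ^ 2 / (4 * (-c / (4 * y))) = y * (d ^ 2 / c) := by
    field_simp
  rw [sum_filter_ne_eq_sub, ← hηA, ← hvertex, ← sum_addChar_quadratic hψ hF hA]
  congr 1
  · exact sum_congr rfl fun z _ => congrArg ψ (by ring)
  · simp

lemma rhoInner_eq (c₂ c₃ : F) {c : F} (hc : c ≠ 0) :
    rhoInner ψ c₂ c₃ c =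
      η (-c) * gaussSum η ψ * ((if c * c₂ = c₃ ^ 2 then (Fintype.card F : R) else 0) - 1) -
        η (-c₂) * gaussSum η ψ := by
  have hterm : ∀ y ∈ ({y | y ≠ 0} : Finset F),
      ψ (-(y * c₂)) * η y * ∑ z with z ≠ 0, ψ (-(z ^ 2 * c) / (4 * y) - z * c₃) =
        η (-c) * gaussSum η ψ * ψ (y * (c₃ ^ 2 / c - c₂)) - η y * ψ.mulShift (-c₂) y := by
    intro y hy
    have hy : y ≠ 0 := (mem_filter.mp hy).2
    have hψy : ψ (y * (c₃ ^ 2 / c - c₂)) = ψ (-(y * c₂)) * ψ (y * (c₃ ^ 2 / c)) := by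
      rw [← AddChar.map_add_eq_mul]
      ring_nf
    rw [sum_ne_zero_addChar_quadratic hψ hF hc hy, hψy, AddChar.mulShift_apply, neg_mul,
      mul_comm c₂]
    linear_combination ψ (-(y * c₂)) * η (-c) * gaussSum η ψ * ψ (y * (c₃ ^ 2 / c)) *
      quadraticCharIn_sq_eq_one R hy
  have hgauss : ∑ y with y ≠ 0, η y * ψ.mulShift (-c₂) y = η (-c₂) * gaussSum η ψ := by
    rw [sum_filter_ne_eq_sub, quadraticCharIn_zero, zero_mul, sub_zero,
      ← gaussSum_quadraticCharIn_mulShift hF, gaussSum]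
  have hiff : c₃ ^ 2 / c - c₂ = 0 ↔ c * c₂ = c₃ ^ 2 := by
    rw [sub_eq_zero, div_eq_iff hc, mul_comm c, eq_comm]
  rw [rhoInner, sum_congr rfl hterm, sum_sub_distrib, ← mul_sum, sum_ne_zero_mulShift hψ,
    hgauss]
  simp only [hiff]

lemma sum_rhoInner (c₂ : F) {c₃ : F} (hc₃ : c₃ ≠ 0) :
    ∑ c with c ≠ 0, rhoInner ψ c₂ c₃ c = η (-c₂) * gaussSum η ψ := by
  have hη : ∑ c, η (-c) = 0 := (Equiv.sum_comp (Equiv.neg F) η).trans (sum_quadraticCharIn R hF)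
  have hsq := sum_quadraticCharIn_neg_of_mul_eq_sq R (b := c₂) hc₃
  rw [sum_filter] at hsq
  calc ∑ c with c ≠ 0, rhoInner ψ c₂ c₃ c
      = ∑ c with c ≠ 0, (gaussSum η ψ * Fintype.card F *
            (if c * c₂ = c₃ ^ 2 then η (-c) else 0) -
          gaussSum η ψ * η (-c) - η (-c₂) * gaussSum η ψ) := by
        refine sum_congr rfl fun c hc => ?_
        rw [rhoInner_eq hψ hF c₂ c₃ (mem_filter.mp hc).2]
        split_ifs <;> ring
    _ = η (-c₂) * gaussSum η ψ := by
        rw [sum_filter_ne_eq_sub]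
        simp only [sum_sub_distrib, ← mul_sum, hη, hsq, sum_const, card_univ, nsmul_eq_mul,
          neg_zero, quadraticCharIn_zero, ite_self]
        ring

theorem rho_eval_general {c₁ c₃ : F} (c₂ : F) (hc₁ : c₁ ≠ 0) (hc₃ : c₃ ≠ 0) :
    (c₃ ^ 2 - c₁ * c₂ = 0 →
      rho ψ c₁ c₂ c₃ = -((η (-c₁) + η (-c₂)) * gaussSum η ψ) +
        η (-c₁) * ((Fintype.card F : R) - 1) ^ 2 * gaussSum η ψ) ∧
    (c₃ ^ 2 - c₁ * c₂ ≠ 0 →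
      rho ψ c₁ c₂ c₃ = -(((Fintype.card F : R) + 1) * η (-c₂) * gaussSum η ψ) -
        (Fintype.card F : R) * η (-c₁) * gaussSum η ψ) := by
  rw [rho, sum_sum_mulShift_mul hψ hc₁, sum_rhoInner hψ hF c₂ hc₃, rhoInner_eq hψ hF c₂ c₃ hc₁]
  refine ⟨fun h => ?_, fun h => ?_⟩
  · have h : c₁ * c₂ = c₃ ^ 2 := (sub_eq_zero.mp h).symm
    rw [if_pos h, quadraticCharIn_neg_eq_of_mul_eq_sq R hc₃ h]
    ring
  · rw [if_neg fun h' => h (sub_eq_zero.mpr h'.symm)]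
    ring

end Rho

section PrimeField

lemma chiBar_eq_stdAddChar {p : ℕ} [NeZero p] (c : ZMod p) : chiBar p c = ZMod.stdAddChar c := by
  rw [ZMod.stdAddChar_apply, ZMod.toCircle_apply, chiBar, zeta, ← Complex.exp_nat_mul]
  congr 1
  ring

variable {p : ℕ} [Fact p.Prime]

lemma etaBar_eq_quadraticCharIn (c : ZMod p) : etaBar p c = quadraticCharIn (ZMod p) ℂ c := by
  rw [quadraticCharIn_apply, quadraticChar_apply, quadraticCharFun, etaBar]
  split_ifs <;> simp

lemma GaussP_eq_gaussSum :
    GaussP p = gaussSum (quadraticCharIn (ZMod p) ℂ) ZMod.stdAddChar := by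
  simp only [GaussP, etaBar_eq_quadraticCharIn, chiBar_eq_stdAddChar, gaussSum,
    sum_filter_ne_eq_sub, quadraticCharIn_zero, zero_mul, sub_zero]

end PrimeField

theorem rho_eval (p : ℕ) [Fact (Nat.Prime p)] (hp : Odd p)
    (c₁ c₂ c₃ : ZMod p) (hc₁ : c₁ ≠ 0) (hc₂ : c₂ ≠ 0) (hc₃ : c₃ ≠ 0) :
    (c₃ ^ 2 - c₁ * c₂ = 0 →
      (∑ c ∈ univ.filter (fun c : ZMod p => c ≠ 0), ∑ x ∈ univ.filter (fun x : ZMod p => x ≠ 0), chiBar p (x * (c - c₁)) *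
      ∑ y ∈ univ.filter (fun y : ZMod p => y ≠ 0), chiBar p (-(y * c₂)) * etaBar p y *
        ∑ z ∈ univ.filter (fun z : ZMod p => z ≠ 0), chiBar p (-(z ^ 2 * c) / (4 * y) - z * c₃)) = -((etaBar p (-c₁) + etaBar p (-c₂)) * GaussP p) + etaBar p (-c₁) * ((p : ℂ) - 1) ^ 2 * GaussP p) ∧
    (c₃ ^ 2 - c₁ * c₂ ≠ 0 →
      (∑ c ∈ univ.filter (fun c : ZMod p => c ≠ 0), ∑ x ∈ univ.filter (fun x : ZMod p => x ≠ 0), chiBar p (x * (c - c₁)) *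
      ∑ y ∈ univ.filter (fun y : ZMod p => y ≠ 0), chiBar p (-(y * c₂)) * etaBar p y *
        ∑ z ∈ univ.filter (fun z : ZMod p => z ≠ 0), chiBar p (-(z ^ 2 * c) / (4 * y) - z * c₃)) = -(((p : ℂ) + 1) * etaBar p (-c₂) * GaussP p) - (p : ℂ) * etaBar p (-c₁) * GaussP p) := by
  have hF : ringChar (ZMod p) ≠ 2 := by
    rw [ZMod.ringChar_zmod_n]
    exact hp.ne_two_of_dvd_nat dvd_rfl
  simpa only [rho, rhoInner, chiBar_eq_stdAddChar, etaBar_eq_quadraticCharIn, GaussP_eq_gaussSum,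
    ZMod.card] using rho_eval_general (ZMod.isPrimitive_stdAddChar p) hF c₂ hc₁ hc₃
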